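/- arXiv:2311.13823 — 2 statements merged into one kernel-verified Lean document; each statement's English description precedes it below -/
import Mathlib

section
/- For every integer m ≥ 0, β_{6m+4} = β_{3m+2}. Consequently, if 𝐔_β contains a sequence of smallest period 3m+2, then it contains one of smallest period 6m+4 for every β strictly above the common critical base. -/
open Filter Set

noncomputable section

namespace FatSierpinski

/-- The digit set Ω = {(0,0),(1,0),(0,1)} ⊆ ℝ². -/
def OmegaR : Set (ℝ × ℝ) := {(0, 0), (1, 0), (0, 1)}

/-- The fat Sierpinski gasket `S_β` (sequences are 0-indexed: `d i` is the digit d_{i+1}). -/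
def Sfat (β : ℝ) : Set (ℝ × ℝ) :=
  {x | ∃ d : ℕ → ℝ × ℝ, (∀ i, d i ∈ OmegaR) ∧ x = ∑' i : ℕ, (β ^ (i + 1))⁻¹ • d i}

/-- The convex hull `Δ_β` of `S_β`. -/
def Delta (β : ℝ) : Set (ℝ × ℝ) := convexHull ℝ (Sfat β)

/-- The map `f_d(x) = (x + d)/β`. -/
def fmap (β : ℝ) (d : ℝ × ℝ) (x : ℝ × ℝ) : ℝ × ℝ := β⁻¹ • (x + d)

/-- The overlap region `O_β = ⋃_{c ≠ d ∈ Ω} f_c(Δ_β) ∩ f_d(Δ_β)`. -/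
def Ofat (β : ℝ) : Set (ℝ × ℝ) :=
  ⋃ c ∈ OmegaR, ⋃ d ∈ OmegaR, ⋃ (_ : c ≠ d), (fmap β c '' Delta β) ∩ (fmap β d '' Delta β)

/-- The univoque set of codings `𝐔_β`. -/
def Ufat (β : ℝ) : Set (ℕ → ℝ × ℝ) :=
  {d | (∀ i, d i ∈ OmegaR) ∧
    ∀ n : ℕ, (∑' i : ℕ, (β ^ (i + 1))⁻¹ • d (n + i)) ∉ Ofat β}

/-- `d` has smallest period `k`. -/
def SmallestPeriod {α : Type*} (d : ℕ → α) (k : ℕ) : Prop :=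
  0 < k ∧ (∀ i, d (i + k) = d i) ∧ ∀ j, 0 < j → j < k → ∃ i, d (i + j) ≠ d i

/-- The critical base `β_k`. -/
def betaK (k : ℕ) : ℝ :=
  sInf {β : ℝ | β ∈ Set.Ioc (1 : ℝ) 2 ∧ ∃ d ∈ Ufat β, SmallestPeriod d k}

/-- Strict lexicographic order on sequences. -/
def seqLT {α : Type*} [Preorder α] (a b : ℕ → α) : Prop :=
  ∃ n, (∀ i < n, a i = b i) ∧ a n < b n

/-- Weak lexicographic order on sequences. -/
def seqLE {α : Type*} [Preorder α] (a b : ℕ → α) : Prop :=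
  seqLT a b ∨ a = b

/-- `a` is a 0-1 sequence. -/
def IsBinary (a : ℕ → ℕ) : Prop := ∀ i, a i ≤ 1

/-- `a` does not end with `0^∞`. -/
def NotEndInZeros (a : ℕ → ℕ) : Prop := ∀ N, ∃ i, N ≤ i ∧ a i ≠ 0

/-- `∑_{i=1}^∞ a_i β^{-i} = 1` (0-indexed: `a i` is a_{i+1}). -/
def SumsToOne (β : ℝ) (a : ℕ → ℕ) : Prop :=
  ∑' i : ℕ, (a i : ℝ) / β ^ (i + 1) = 1

/-- `a` is the quasi-greedy β-expansion of 1: the lexicographically largest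
binary sequence not ending in `0^∞` whose value in base β is 1. -/
def IsQuasiGreedy (β : ℝ) (a : ℕ → ℕ) : Prop :=
  IsBinary a ∧ NotEndInZeros a ∧ SumsToOne β a ∧
    ∀ b : ℕ → ℕ, IsBinary b → NotEndInZeros b → SumsToOne β b → seqLE b a

/-- `w⁺`: replace the final digit 0 of a block by 1. -/
def plusBlock (w : List ℕ) : List ℕ := w.dropLast ++ [1]

/-- `Θ` flips the outer digits of every consecutive triple
(000↦101, 001↦100, 100↦001, 101↦000). -/
def thetaBlock (w : List ℕ) : List ℕ :=
  w.mapIdx fun i x => if i % 3 = 1 then x else 1 - x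

/-- `tB n` is the block `t_{n+1}`: `t_1 = 100`, `t_{n+1} = t_n⁺ Θ(t_n⁺)`. -/
def tB : ℕ → List ℕ
  | 0 => [1, 0, 0]
  | n + 1 => plusBlock (tB n) ++ thetaBlock (plusBlock (tB n))

/-- The sequence `u w^∞` (the block `u` followed by `w` repeated forever). -/
def prefixPeriodic (u w : List ℕ) : ℕ → ℕ := fun i =>
  if i < u.length then u.getD i 0 else w.getD ((i - u.length) % w.length) 0

/-- The periodic sequence `w^∞`. -/
def periodicSeq (w : List ℕ) : ℕ → ℕ := fun i => w.getD (i % w.length) 0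

/-- The componentwise limit `λ = 101001000101…` of the blocks `t_n`
(the digit `λ_{i+1}` has stabilized in `t_{i+2} = tB (i+1)`). -/
def lamSeq : ℕ → ℕ := fun i => (tB (i + 1)).getD i 0

/-- `β_c` is the unique base in (1,2] with `∑ λ_i β^{-i} = 1`. -/
def IsBetaC (β : ℝ) : Prop := β ∈ Set.Ioc (1 : ℝ) 2 ∧ SumsToOne β lamSeq

/-- The sequence `t_{n+2}⁺ (Θ(t_{n+2}))^∞`, the quasi-greedy expansion of 1 for `β̂_n`. -/
def hatSeq (n : ℕ) : ℕ → ℕ :=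
  prefixPeriodic (plusBlock (tB (n + 1))) (thetaBlock (tB (n + 1)))

/-- The Sharkovskii ordering `k ⊳ ℓ` on positive integers. -/
def Sharkovskii (k l : ℕ) : Prop :=
  ∃ a b c d : ℕ, k = 2 ^ a * (2 * b + 1) ∧ l = 2 ^ c * (2 * d + 1) ∧ k ≠ l ∧
    ((1 ≤ b ∧ d = 0) ∨ (1 ≤ b ∧ 1 ≤ d ∧ (a < c ∨ (a = c ∧ b < d))) ∨
      (b = 0 ∧ d = 0 ∧ c < a))

/-- The digit set Ω as pairs of naturals (for combinatorial statements). -/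
def OmegaD : Set (ℕ × ℕ) := {(0, 0), (1, 0), (0, 1)}

/-- The periodic extension `(d_1 … d_k)^∞` of a block. -/
def cyc (d : List (ℕ × ℕ)) : ℕ → ℕ × ℕ := fun i => d.getD (i % d.length) (0, 0)

/-- Strict lexicographic order on lists. -/
def listLT (u v : List ℕ) : Prop := List.Lex (· < ·) u v

/-- Weak lexicographic order on lists. -/
def listLE (u v : List ℕ) : Prop := listLT u v ∨ u = v

/-- The first components `d_1¹ … d_k¹` of a block over Ω. -/
def comp1 (d : List (ℕ × ℕ)) : List ℕ := d.map Prod.fst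

/-- The second components `d_1² … d_k²` of a block over Ω. -/
def comp2 (d : List (ℕ × ℕ)) : List ℕ := d.map Prod.snd

/-- The digits `(1 - d_1⁺) … (1 - d_k⁺)` where `d⁺ = d¹ + d²`. -/
def comp3 (d : List (ℕ × ℕ)) : List ℕ := d.map fun x => 1 - x.1 - x.2

/-- Cyclic shift of a list by `j`. -/
def rot {α : Type*} (j : ℕ) (l : List α) : List α := l.drop j ++ l.take j

/-- `d` is a representation of the binary block `a`. -/
def IsRepresentation (a : List ℕ) (d : List (ℕ × ℕ)) : Prop :=
  d.length = a.length ∧ (∀ x ∈ d, x ∈ OmegaD) ∧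
  SmallestPeriod (cyc d) a.length ∧
  comp1 d = a ∧ listLE (comp3 d) (comp2 d) ∧ listLE (comp2 d) a ∧
  ∀ j < a.length,
    listLE (comp1 (rot j d)) a ∧ listLE (comp2 (rot j d)) a ∧ listLE (comp3 (rot j d)) a

/-- A binary block is admissible if it has a representation. -/
def IsAdmissible (a : List ℕ) : Prop := ∃ d, IsRepresentation a d

/-- The `i`-th consecutive triple of a block (0-indexed). -/
def tripleAt (a : List ℕ) (i : ℕ) : List ℕ :=
  [a.getD (3 * i) 0, a.getD (3 * i + 1) 0, a.getD (3 * i + 2) 0]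

/-- The edges of the directed graph on {000, 001, 100, 101} defining the subshift `X`. -/
def XEdge (u v : List ℕ) : Prop :=
  (u, v) ∈ ({([1,0,1], [0,0,1]), ([1,0,1], [0,0,0]), ([0,0,1], [0,0,0]),
             ([0,0,0], [1,0,1]), ([0,0,0], [1,0,0]), ([1,0,0], [1,0,1])} :
      Set (List ℕ × List ℕ))



/-- indicator of the digit `c` in the sequence `d`, starting at position `n`. -/
def ind (c : ℝ × ℝ) (d : ℕ → ℝ × ℝ) (n : ℕ) : ℕ → ℕ :=
  open Classical in fun i => if d (n + i) = c then 1 else 0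

/-- value of a natural number sequence at `x = 1/β`. -/
def val (x : ℝ) (a : ℕ → ℕ) : ℝ := ∑' i : ℕ, (a i : ℝ) * x ^ (i + 1)

/-- prefix counts. -/
def cnt (a : ℕ → ℕ) (n : ℕ) : ℕ := ∑ i ∈ Finset.range n, a i

/-- weighted sum of prefix counts. -/
def wsum (x : ℝ) (c : ℕ → ℕ) : ℝ := (1 - x) * ∑' n : ℕ, (c n : ℝ) * x ^ n

/-- the critical count sequence `⌈n (m+1)/(3m+2)⌉`. -/
def crit (m n : ℕ) : ℕ := ((m + 1) * n + (3 * m + 1)) / (3 * m + 2)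

lemma ind_le (c d n i) : ind c d n i ≤ 1 := by
  unfold ind; split_ifs <;> simp

lemma summable_cnt {x : ℝ} (hx0 : 0 < x) (hx1 : x < 1) (c : ℕ → ℕ) (hc : ∀ n, c n ≤ n) :
    Summable (fun n => (c n : ℝ) * x ^ n) := by
  have h := summable_pow_mul_geometric_of_norm_lt_one 1 (r := x)
    (by rw [Real.norm_of_nonneg hx0.le]; exact hx1)
  refine Summable.of_nonneg_of_le (fun n => by positivity) (fun n => ?_) h
  have : (c n : ℝ) ≤ n := by exact_mod_cast hc n
  simp only [pow_one]
  gcongr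

lemma summable_val {x : ℝ} (hx0 : 0 < x) (hx1 : x < 1) (a : ℕ → ℕ) (ha : ∀ n, a n ≤ 1) :
    Summable (fun n => (a n : ℝ) * x ^ (n + 1)) := by
  have h := (summable_geometric_of_lt_one hx0.le hx1).mul_left x
  refine Summable.of_nonneg_of_le (fun n => by positivity) (fun n => ?_) h
  have : (a n : ℝ) ≤ 1 := by exact_mod_cast ha n
  calc (a n : ℝ) * x ^ (n + 1) ≤ 1 * x ^ (n + 1) := by gcongr
    _ = x * x ^ n := by ring

lemma cnt_le (a : ℕ → ℕ) (ha : ∀ n, a n ≤ 1) (n : ℕ) : cnt a n ≤ n := by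
  unfold cnt
  calc _ ≤ ∑ i ∈ Finset.range n, 1 := Finset.sum_le_sum (fun i _ => ha i)
    _ = n := by simp

lemma val_eq_wsum {x : ℝ} (hx0 : 0 < x) (hx1 : x < 1) (a : ℕ → ℕ) (ha : ∀ n, a n ≤ 1) :
    val x a = wsum x (cnt a) := by
  have hs := summable_cnt hx0 hx1 (cnt a) (cnt_le a ha)
  have hv := summable_val hx0 hx1 a ha
  have h1 := hs.tsum_eq_zero_add
  have h2 : ∑' n, ((cnt a (n + 1) : ℕ) : ℝ) * x ^ (n + 1)
      = x * ∑' n, (cnt a n : ℝ) * x ^ n + val x a := by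
    unfold val
    rw [← tsum_mul_left, ← (hs.mul_left x).tsum_add hv]
    refine tsum_congr fun n => ?_
    simp only [cnt, Finset.sum_range_succ]
    push_cast
    ring
  rw [h2] at h1
  simp only [cnt, Finset.range_zero, Finset.sum_empty, Nat.cast_zero, zero_mul, zero_add] at h1
  unfold wsum
  simp only [cnt]
  linarith

lemma wsum_mono {x : ℝ} (hx0 : 0 < x) (hx1 : x < 1) (c c' : ℕ → ℕ) (h : ∀ n, c n ≤ c' n)
    (hc' : ∀ n, c' n ≤ n) : wsum x c ≤ wsum x c' := by
  unfold wsum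
  have h1 : 0 ≤ 1 - x := by linarith
  refine mul_le_mul_of_nonneg_left ?_ h1
  refine (summable_cnt hx0 hx1 c fun n => (h n).trans (hc' n)).tsum_le_tsum (fun n => ?_)
    (summable_cnt hx0 hx1 c' hc')
  have : (c n : ℝ) ≤ c' n := by exact_mod_cast h n
  gcongr

lemma crit_le (m n : ℕ) : crit m n ≤ n := by
  unfold crit
  rcases Nat.eq_zero_or_pos n with rfl | hn
  · simp
  · rw [← Nat.lt_succ_iff, Nat.div_lt_iff_lt_mul (by omega)]
    nlinarith

lemma crit_le_iff (m n k : ℕ) : crit m n ≤ k ↔ (m + 1) * n ≤ (3 * m + 2) * k := by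
  unfold crit
  rw [← Nat.lt_succ_iff, Nat.div_lt_iff_lt_mul (by omega), Nat.succ_eq_add_one,
    show (k + 1) * (3 * m + 2) = (3 * m + 2) * k + (3 * m + 2) by ring]
  omega

/-- recursion for values of tails. -/
lemma val_step {x : ℝ} (hx0 : 0 < x) (hx1 : x < 1) (c d n) :
    val x (ind c d n) = x * ((ind c d n 0 : ℕ) + val x (ind c d (n + 1))) := by
  have hs := summable_val hx0 hx1 (ind c d n) (ind_le c d n)
  unfold val
  rw [hs.tsum_eq_zero_add, mul_add, ← tsum_mul_left]
  congr 1
  · ring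
  · refine tsum_congr fun i => ?_
    have : ind c d n (i + 1) = ind c d (n + 1) i := by
      simp only [ind]
      rw [show n + (i + 1) = n + 1 + i by ring]
    rw [this]; ring

lemma val_nonneg {x : ℝ} (hx0 : 0 < x) (a : ℕ → ℕ) : 0 ≤ val x a :=
  tsum_nonneg fun i => by positivity

/-- triangle -/
def Tri (β : ℝ) : Set (ℝ × ℝ) := {p | 0 ≤ p.1 ∧ 0 ≤ p.2 ∧ p.1 + p.2 ≤ 1 / (β - 1)}

lemma point_eq {β : ℝ} (hβ : 1 < β) (d : ℕ → ℝ × ℝ) (hd : ∀ i, d i ∈ OmegaR) (n : ℕ) :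
    (∑' i : ℕ, (β ^ (i + 1))⁻¹ • d (n + i)) =
      (val β⁻¹ (ind (1, 0) d n), val β⁻¹ (ind (0, 1) d n)) := by
  have hx0 : 0 < β⁻¹ := by positivity
  have hx1 : β⁻¹ < 1 := inv_lt_one_of_one_lt₀ hβ
  have h1 := (summable_val hx0 hx1 (ind (1, 0) d n) (ind_le _ d n)).hasSum
  have h2 := (summable_val hx0 hx1 (ind (0, 1) d n) (ind_le _ d n)).hasSum
  have h := h1.prodMk h2
  refine Eq.trans ?_ h.tsum_eq
  refine tsum_congr fun i => ?_
  rcases hd (n + i) with h | h | (h : _ = _) <;> simp [ind, h]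

lemma val_sum {β : ℝ} (hβ : 1 < β) (d : ℕ → ℝ × ℝ) (hd : ∀ i, d i ∈ OmegaR) (n : ℕ) :
    val β⁻¹ (ind (0, 0) d n) + val β⁻¹ (ind (1, 0) d n) + val β⁻¹ (ind (0, 1) d n)
      = 1 / (β - 1) := by
  have hx0 : 0 < β⁻¹ := by positivity
  have hx1 : β⁻¹ < 1 := inv_lt_one_of_one_lt₀ hβ
  have h0 := (summable_val hx0 hx1 (ind (0, 0) d n) (ind_le _ d n))
  have h1 := (summable_val hx0 hx1 (ind (1, 0) d n) (ind_le _ d n))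
  have h2 := (summable_val hx0 hx1 (ind (0, 1) d n) (ind_le _ d n))
  unfold val
  rw [← h0.tsum_add h1, ← (h0.add h1).tsum_add h2]
  have : ∀ i, (ind (0, 0) d n i : ℝ) * β⁻¹ ^ (i + 1) + (ind (1, 0) d n i : ℝ) * β⁻¹ ^ (i + 1)
      + (ind (0, 1) d n i : ℝ) * β⁻¹ ^ (i + 1) = β⁻¹ * β⁻¹ ^ i := by
    intro i
    rcases hd (n + i) with h | h | (h : _ = _) <;> simp [ind, h] <;> ring
  rw [tsum_congr this, tsum_mul_left, tsum_geometric_of_lt_one hx0.le hx1]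
  have : β - 1 ≠ 0 := by linarith
  have : β ≠ 0 := by linarith
  have : 1 - β⁻¹ ≠ 0 := by linarith
  field_simp

lemma point_mem_Tri {β : ℝ} (hβ : 1 < β) (d : ℕ → ℝ × ℝ) (hd : ∀ i, d i ∈ OmegaR) (n : ℕ) :
    (∑' i : ℕ, (β ^ (i + 1))⁻¹ • d (n + i)) ∈ Tri β := by
  rw [point_eq hβ d hd]
  have hx0 : 0 < β⁻¹ := by positivity
  have := val_sum hβ d hd n
  have := val_nonneg hx0 (ind (0, 0) d n)
  refine ⟨val_nonneg hx0 _, val_nonneg hx0 _, ?_⟩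
  simp only
  linarith

lemma const_mem {β : ℝ} (hβ : 1 < β) (c : ℝ × ℝ) (hc : c ∈ OmegaR) :
    (1 / (β - 1)) • c ∈ Sfat β := by
  refine ⟨fun _ => c, fun _ => hc, ?_⟩
  have hx0 : 0 < β⁻¹ := by positivity
  have hx1 : β⁻¹ < 1 := inv_lt_one_of_one_lt₀ hβ
  have hs : HasSum (fun i : ℕ => (β ^ (i + 1))⁻¹) (1 / (β - 1)) := by
    have h := (hasSum_geometric_of_lt_one hx0.le hx1).mul_left β⁻¹
    have e : β⁻¹ * (1 - β⁻¹)⁻¹ = 1 / (β - 1) := by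
      have : β - 1 ≠ 0 := by linarith
      have : β ≠ 0 := by linarith
      have : 1 - β⁻¹ ≠ 0 := by linarith
      field_simp
    rw [e] at h
    have e2 : (fun i : ℕ => (β ^ (i + 1))⁻¹) = fun i : ℕ => β⁻¹ * β⁻¹ ^ i := by
      funext i
      rw [← pow_succ', inv_pow]
    rw [e2]
    exact h
  exact (hs.smul_const c).tsum_eq.symm

lemma Delta_eq {β : ℝ} (hβ : 1 < β) : Delta β = Tri β := by
  apply Set.Subset.antisymm
  · refine convexHull_min ?_ ?_
    · rintro x ⟨d, hd, rfl⟩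
      simpa using point_mem_Tri hβ d hd 0
    · rintro x ⟨h1, h2, h3⟩ y ⟨k1, k2, k3⟩ a b ha hb hab
      simp only [Tri, Set.mem_ofPred_eq, Prod.fst_add, Prod.snd_add, Prod.smul_fst, Prod.smul_snd,
        smul_eq_mul]
      refine ⟨by positivity, by positivity, ?_⟩
      have e : 1 / (β - 1) = a * (1 / (β - 1)) + b * (1 / (β - 1)) := by
        rw [← add_mul, hab, one_mul]
      rw [e]
      nlinarith
  · rintro ⟨u, v⟩ ⟨h1, h2, h3⟩
    simp only at h1 h2 h3
    have hb : 0 < β - 1 := by linarith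
    have hcv : Convex ℝ (Delta β) := convex_convexHull ℝ _
    have m0 : (1 / (β - 1)) • ((0, 0) : ℝ × ℝ) ∈ Delta β :=
      subset_convexHull ℝ _ (const_mem hβ _ (by simp [OmegaR]))
    have m1 : (1 / (β - 1)) • ((1, 0) : ℝ × ℝ) ∈ Delta β :=
      subset_convexHull ℝ _ (const_mem hβ _ (by simp [OmegaR]))
    have m2 : (1 / (β - 1)) • ((0, 1) : ℝ × ℝ) ∈ Delta β :=
      subset_convexHull ℝ _ (const_mem hβ _ (by simp [OmegaR]))
    have h3' : u * (β - 1) + v * (β - 1) ≤ 1 := by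
      rw [le_div_iff₀ hb] at h3
      linarith
    have := hcv.sum_mem (t := Finset.univ) (w := ![1 - u * (β - 1) - v * (β - 1),
        u * (β - 1), v * (β - 1)]) (z := ![(1 / (β - 1)) • ((0, 0) : ℝ × ℝ),
        (1 / (β - 1)) • ((1, 0) : ℝ × ℝ), (1 / (β - 1)) • ((0, 1) : ℝ × ℝ)])
        (by
          intro i _
          fin_cases i
          · simp; linarith
          · simp; positivity
          · simp; positivity)
        (by simp [Fin.sum_univ_three]; ring)
        (by
          intro i _
          fin_cases i
          · exact m0
          · exact m1
          · exact m2)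
    convert this using 1
    simp [Fin.sum_univ_three]
    constructor <;> field_simp

lemma mem_fmap_iff {β : ℝ} (hβ : 1 < β) (c p : ℝ × ℝ) (S : Set (ℝ × ℝ)) :
    p ∈ fmap β c '' S ↔ β • p - c ∈ S := by
  have h0 : β ≠ 0 := by linarith
  constructor
  · rintro ⟨y, hy, rfl⟩
    simpa [fmap, smul_smul, h0] using hy
  · intro h
    exact ⟨_, h, by simp [fmap, smul_smul, h0]⟩

lemma point_mem_fmap {β : ℝ} (hβ : 1 < β) (d : ℕ → ℝ × ℝ) (hd : ∀ i, d i ∈ OmegaR) (n : ℕ)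
    (c : ℝ × ℝ) (hc : c ∈ OmegaR) :
    (∑' i : ℕ, (β ^ (i + 1))⁻¹ • d (n + i)) ∈ fmap β c '' Delta β ↔
      β⁻¹ ≤ val β⁻¹ (ind c d n) := by
  rw [mem_fmap_iff hβ, Delta_eq hβ, point_eq hβ d hd]
  have hx0 : 0 < β⁻¹ := by positivity
  have hs := val_sum hβ d hd n
  have n0 := val_nonneg hx0 (ind (0, 0) d n)
  have n1 := val_nonneg hx0 (ind (1, 0) d n)
  have n2 := val_nonneg hx0 (ind (0, 1) d n)
  have hb0 : 0 < β := by linarith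
  have hb1 : β - 1 ≠ 0 := by linarith
  have key : β * (1 / (β - 1)) = 1 / (β - 1) + 1 := by field_simp; ring
  have hle : ∀ v : ℝ, β⁻¹ ≤ v ↔ 1 ≤ β * v := by
    intro v
    rw [inv_le_iff_one_le_mul₀ hb0, mul_comm]
  have hs' : β * val β⁻¹ (ind (0, 0) d n) + β * val β⁻¹ (ind (1, 0) d n)
      + β * val β⁻¹ (ind (0, 1) d n) = 1 / (β - 1) + 1 := by
    rw [← key, ← hs]; ring
  have n0' := mul_nonneg hb0.le n0
  have n1' := mul_nonneg hb0.le n1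
  have n2' := mul_nonneg hb0.le n2
  rw [hle]
  rcases hc with rfl | rfl | rfl <;>
    simp only [Tri, Set.mem_ofPred_eq, Prod.smul_mk, Prod.mk_sub_mk, smul_eq_mul] <;>
    constructor <;> intro h
  · linarith [h.2.2]
  · refine ⟨?_, ?_, ?_⟩ <;> linarith
  · linarith [h.1]
  · refine ⟨?_, ?_, ?_⟩ <;> linarith
  · linarith [h.2.1]
  · refine ⟨?_, ?_, ?_⟩ <;> linarith

lemma mem_Ofat {β : ℝ} (hβ : 1 < β) (d : ℕ → ℝ × ℝ) (hd : ∀ i, d i ∈ OmegaR) (n : ℕ) :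
    (∑' i : ℕ, (β ^ (i + 1))⁻¹ • d (n + i)) ∈ Ofat β ↔
      ∃ c ∈ OmegaR, ∃ c' ∈ OmegaR, c ≠ c' ∧ β⁻¹ ≤ val β⁻¹ (ind c d n) ∧
        β⁻¹ ≤ val β⁻¹ (ind c' d n) := by
  simp only [Ofat, Set.mem_iUnion, Set.mem_inter_iff, exists_prop]
  constructor
  · rintro ⟨c, hc, c', hc', hne, h1, h2⟩
    exact ⟨c, hc, c', hc', hne, (point_mem_fmap hβ d hd n c hc).1 h1,
      (point_mem_fmap hβ d hd n c' hc').1 h2⟩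
  · rintro ⟨c, hc, c', hc', hne, h1, h2⟩
    exact ⟨c, hc, c', hc', hne, (point_mem_fmap hβ d hd n c hc).2 h1,
      (point_mem_fmap hβ d hd n c' hc').2 h2⟩

/-- sufficient condition -/
lemma mem_U {β : ℝ} (hβ : 1 < β) (d : ℕ → ℝ × ℝ) (hd : ∀ i, d i ∈ OmegaR)
    (h : ∀ c ∈ OmegaR, ∀ n, val β⁻¹ (ind c d n) < 1) : d ∈ Ufat β := by
  refine ⟨hd, fun n hn => ?_⟩
  have hx0 : 0 < β⁻¹ := by positivity
  have hx1 : β⁻¹ < 1 := inv_lt_one_of_one_lt₀ hβ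
  rw [mem_Ofat hβ d hd] at hn
  obtain ⟨c, hc, c', hc', hne, h1, h2⟩ := hn
  have aux : ∀ e ∈ OmegaR, d n ≠ e → val β⁻¹ (ind e d n) < β⁻¹ := by
    intro e he hde
    rw [val_step hx0 hx1]
    have : ind e d n 0 = 0 := by simp [ind, hde]
    rw [this]
    have := h e he (n + 1)
    push_cast
    nlinarith
  by_cases hcd : d n = c
  · have := aux c' hc' (by rw [hcd]; exact hne)
    linarith
  · have := aux c hc hcd
    linarith

/-- necessary condition for periodic sequences -/
lemma val_lt_of_mem_U {β : ℝ} (hβ : 1 < β) (hβ2 : β ≤ 2) (d : ℕ → ℝ × ℝ) (hU : d ∈ Ufat β)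
    (P : ℕ) (hP : 1 < P) (hd : SmallestPeriod d P) (c : ℝ × ℝ) (hc : c ∈ OmegaR) (n : ℕ) :
    val β⁻¹ (ind c d n) < 1 := by
  obtain ⟨hΩ, hU⟩ := hU
  have hx0 : 0 < β⁻¹ := by positivity
  have hx1 : β⁻¹ < 1 := inv_lt_one_of_one_lt₀ hβ
  have hb0 : 0 < β := by linarith
  have hbb : β⁻¹ * β = 1 := inv_mul_cancel₀ (by linarith)
  have step : ∀ k, d k ≠ c → val β⁻¹ (ind c d (k + 1)) < 1 := by
    intro k hk
    by_contra! hcon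
    refine hU k ((mem_Ofat hβ d hΩ k).2 ⟨d k, hΩ k, c, hc, hk, ?_, ?_⟩)
    · rw [val_step hx0 hx1]
      have : ind (d k) d k 0 = 1 := by simp [ind]
      rw [this]
      have := val_nonneg hx0 (ind (d k) d (k + 1))
      push_cast
      nlinarith
    · rw [val_step hx0 hx1]
      have : (0 : ℝ) ≤ (ind c d k 0 : ℕ) := by positivity
      nlinarith
  obtain ⟨i0, hi0⟩ : ∃ i, d i ≠ c := by
    by_contra! hall
    obtain ⟨i, hi⟩ := hd.2.2 1 one_pos hP
    exact hi (by rw [hall, hall])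
  have all : ∀ k, val β⁻¹ (ind c d (i0 + 1 + k)) < 1 := by
    intro k
    induction k with
    | zero => exact step i0 hi0
    | succ k ih =>
      by_cases hk : d (i0 + 1 + k) = c
      · rw [val_step hx0 hx1] at ih
        have : ind c d (i0 + 1 + k) 0 = 1 := by simp [ind, hk]
        rw [this] at ih
        have h2 : β * (β⁻¹ * (((1 : ℕ) : ℝ) + val β⁻¹ (ind c d (i0 + 1 + k + 1)))) < β * 1 :=
          mul_lt_mul_of_pos_left ih hb0
        rw [← mul_assoc, mul_comm β, hbb] at h2
        push_cast at h2
        rw [← add_assoc]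
        linarith
      · exact step _ hk
  have per : ∀ k i, d (i + P * k) = d i := by
    intro k
    induction k with
    | zero => simp
    | succ k ih => intro i; rw [Nat.mul_succ, ← add_assoc, hd.2.1, ih]
  have e : ind c d n = ind c d (n + P * (i0 + 1)) := by
    funext i
    simp only [ind]
    rw [show n + P * (i0 + 1) + i = n + i + P * (i0 + 1) by ring, per]
  rw [e]
  have hge : i0 + 1 ≤ n + P * (i0 + 1) := by nlinarith
  obtain ⟨k, hk⟩ := Nat.exists_eq_add_of_le hge
  rw [hk]
  exact all k

/-- cycle lemma -/
lemma exists_good_start (a : ℕ → ℕ) (P p K : ℕ) (hP : 0 < P) (ha : ∀ i, a (i + P) = a i)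
    (hN : p * P ≤ K * cnt a P) :
    ∃ s, ∀ n, p * n ≤ K * cnt (fun i => a (s + i)) n := by
  have hadd : ∀ s n, cnt a (s + n) = cnt a s + cnt (fun i => a (s + i)) n := by
    intro s n
    simp only [cnt, Finset.sum_range_add]
  let g : ℕ → ℤ := fun n => (K : ℤ) * cnt a n - p * n
  have hg : ∀ n, g n ≤ g (n + P) := by
    intro n
    have h1 : cnt a (n + P) = cnt a P + cnt a n := by
      rw [add_comm n P, hadd]
      congr 2
      funext i
      rw [add_comm P i, ha]
    have h2 : (p : ℤ) * P ≤ K * cnt a P := by exact_mod_cast hN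
    simp only [g, h1]
    push_cast
    nlinarith
  have hg2 : ∀ k n, g n ≤ g (n + P * k) := by
    intro k
    induction k with
    | zero => simp
    | succ k ih => intro n; rw [Nat.mul_succ, ← add_assoc]; exact (ih n).trans (hg _)
  obtain ⟨s, _, hs⟩ := Finset.exists_min_image (Finset.range P) g ⟨0, by simpa using hP⟩
  refine ⟨s, fun n => ?_⟩
  have h1 : g s ≤ g (s + n) := by
    refine (hs ((s + n) % P) (by simpa using Nat.mod_lt _ hP)).trans ?_
    have := hg2 ((s + n) / P) ((s + n) % P)
    rwa [Nat.mod_add_div] at this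
  simp only [g, hadd] at h1
  push_cast at h1
  zify
  linarith

/-- part A -/
lemma partA {β : ℝ} (hβ : 1 < β) (hβ2 : β ≤ 2) (m l : ℕ) (hl : l = 1 ∨ l = 2) (d : ℕ → ℝ × ℝ)
    (hU : d ∈ Ufat β) (hd : SmallestPeriod d ((3 * m + 2) * l)) :
    wsum β⁻¹ (crit m) < 1 := by
  have hx0 : 0 < β⁻¹ := by positivity
  have hx1 : β⁻¹ < 1 := inv_lt_one_of_one_lt₀ hβ
  have hP : 1 < (3 * m + 2) * l := by rcases hl with rfl | rfl <;> omega
  obtain ⟨c, hc, hN⟩ : ∃ c ∈ OmegaR, (m + 1) * l ≤ cnt (ind c d 0) ((3 * m + 2) * l) := by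
    have hsum : ∀ n, cnt (ind (0, 0) d 0) n + cnt (ind (1, 0) d 0) n + cnt (ind (0, 1) d 0) n
        = n := by
      intro n
      simp only [cnt]
      rw [← Finset.sum_add_distrib, ← Finset.sum_add_distrib]
      have : ∀ i, ind (0, 0) d 0 i + ind (1, 0) d 0 i + ind (0, 1) d 0 i = 1 := by
        intro i
        rcases hU.1 (0 + i) with h | h | (h : _ = _) <;> simp only [ind, h] <;> simp
      simp [this]
    by_contra! hcon
    have h0 := hcon (0, 0) (by simp [OmegaR])
    have h1 := hcon (1, 0) (by simp [OmegaR])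
    have h2 := hcon (0, 1) (by simp [OmegaR])
    have := hsum ((3 * m + 2) * l)
    rcases hl with rfl | rfl <;> omega
  obtain ⟨s, hs⟩ := exists_good_start (ind c d 0) ((3 * m + 2) * l) (m + 1) (3 * m + 2)
    (by omega) (by intro i; simp only [ind]; rw [← add_assoc, hd.2.1]) (by nlinarith)
  have e : (fun i => ind c d 0 (s + i)) = ind c d s := by
    funext i; simp [ind]
  rw [e] at hs
  refine lt_of_le_of_lt ?_ (val_lt_of_mem_U hβ hβ2 d hU _ hP hd c hc s)
  rw [val_eq_wsum hx0 hx1 _ (ind_le c d s)]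
  exact wsum_mono hx0 hx1 _ _ (fun n => (crit_le_iff m n _).2 (hs n)) (cnt_le _ (ind_le c d s))

/-- rotation count -/
lemma rot_count (p K x n : ℕ) (hpK : p ≤ K) (hp : 0 < K) :
    ∑ i ∈ Finset.range n, (if (i * p + x) % K < p then 1 else 0) + (x + K - p) / K
      = (n * p + x + K - p) / K := by
  induction n with
  | zero => simp
  | succ n ih =>
    rw [Finset.sum_range_succ, add_right_comm, ih]
    have h := Nat.mod_add_div (n * p + x) K
    have hlt := Nat.mod_lt (n * p + x) hp
    generalize (n * p + x) % K = r at *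
    generalize (n * p + x) / K = q at *
    have e1 : n * p + x + K - p = (r + (K - p)) + K * q := by omega
    have e2 : (n + 1) * p + x + K - p = (r + K) + K * q := by
      rw [Nat.succ_mul]; omega
    rw [e1, e2, Nat.add_mul_div_left _ _ hp, Nat.add_mul_div_left _ _ hp, Nat.add_div_right _ hp,
      Nat.div_eq_of_lt hlt]
    split_ifs with hr
    · rw [Nat.div_eq_of_lt (by omega)]; ring
    · have : (r + (K - p)) / K = 1 := by
        rw [Nat.div_eq_iff hp]; constructor <;> omega
      rw [this]; ring

lemma rot_count_le (m x n : ℕ) :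
    ∑ i ∈ Finset.range n, (if (i * (m + 1) + x) % (3 * m + 2) < m + 1 then 1 else 0)
      ≤ crit m n := by
  have h := rot_count (m + 1) (3 * m + 2) x n (by omega) (by omega)
  have h2 : (n * (m + 1) + x + (3 * m + 2) - (m + 1)) / (3 * m + 2)
      ≤ crit m n + (x + (3 * m + 2) - (m + 1)) / (3 * m + 2) := by
    have hc := (crit_le_iff m n _).1 le_rfl
    rw [← Nat.lt_succ_iff, Nat.div_lt_iff_lt_mul (by omega)]
    have hd := Nat.lt_mul_div_succ (x + (3 * m + 2) - (m + 1)) (show 0 < 3 * m + 2 by omega)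
    generalize (x + (3 * m + 2) - (m + 1)) / (3 * m + 2) = z at *
    generalize crit m n = y at *
    have : (y + z).succ * (3 * m + 2) = (3 * m + 2) * y + (3 * m + 2) * (z + 1) := by
      rw [Nat.succ_eq_add_one]; ring
    rw [this]
    have : n * (m + 1) = (m + 1) * n := mul_comm _ _
    omega
  omega

/-- gaps at least three give a small count -/
lemma gap_count (a : ℕ → ℕ) (h : ∀ i, a i + a (i + 1) + a (i + 2) ≤ 1) (n : ℕ) :
    3 * cnt a n ≤ n + 2 := by
  induction n using Nat.strong_induction_on with
  | _ n ih =>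
    match n with
    | 0 => simp [cnt]
    | 1 => have := h 0; simp only [cnt, Finset.sum_range_succ, Finset.sum_range_zero]; omega
    | 2 => have := h 0; simp only [cnt, Finset.sum_range_succ, Finset.sum_range_zero, zero_add] at *; omega
    | n + 3 =>
      have := h n
      have h2 := ih n (by omega)
      simp only [cnt, Finset.sum_range_succ] at *
      omega

lemma gap_count_le (m : ℕ) (a : ℕ → ℕ) (h : ∀ i, a i + a (i + 1) + a (i + 2) ≤ 1) (n : ℕ) :
    cnt a n ≤ crit m n := by
  have h1 := gap_count a h n
  have hc := (crit_le_iff m n _).1 le_rfl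
  by_contra! hcon
  have : (3 * m + 2) * crit m n + (3 * m + 2) ≤ (3 * m + 2) * cnt a n := by nlinarith
  nlinarith

/-- symbols -/
def sym (v r : ℕ) : ℕ := if r % 3 = 0 then 0 else if r % 3 = 1 then 1 + v else 2 - v

/-- embed symbols as digits -/
def emb : ℕ → ℝ × ℝ
  | 0 => (0, 0)
  | 1 => (1, 0)
  | _ => (0, 1)

lemma emb_inj (a b : ℕ) (ha : a ≤ 2) (hb : b ≤ 2) (h : emb a = emb b) : a = b := by
  interval_cases a <;> interval_cases b <;> simp_all [emb]

lemma emb_mem (a : ℕ) : emb a ∈ OmegaR := by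
  unfold emb; split <;> simp [OmegaR]

/-- coding of period `3m+2`. -/
def s1 (m i : ℕ) : ℕ := sym 0 (i % (3 * m + 2))
/-- coding of period `6m+4`. -/
def s2 (m i : ℕ) : ℕ := sym (i / (3 * m + 2) % 2) (i % (3 * m + 2))

lemma s1_le (m i : ℕ) : s1 m i ≤ 2 := by unfold s1 sym; split_ifs <;> omega
lemma s2_le (m i : ℕ) : s2 m i ≤ 2 := by unfold s2 sym; split_ifs <;> omega

lemma mod_form (m i x e : ℕ) (he : e < 3 * m + 2)
    (hx : i % (3 * m + 2) % 3 * (m + 1) + i % (3 * m + 2) / 3 + x = e ∨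
      i % (3 * m + 2) % 3 * (m + 1) + i % (3 * m + 2) / 3 + x = e + (3 * m + 2)) :
    (i * (m + 1) + x) % (3 * m + 2) = e := by
  have h1 := Nat.mod_add_div i (3 * m + 2)
  have h2 := Nat.mod_add_div (i % (3 * m + 2)) 3
  generalize i % (3 * m + 2) = r at *
  generalize i / (3 * m + 2) = q at *
  generalize r % 3 = u at *
  generalize r / 3 = w at *
  have key : i * (m + 1) + x = (u * (m + 1) + w + x) + (3 * m + 2) * (q * (m + 1) + w) := by
    rw [← h1, ← h2]; ring
  rw [key, Nat.add_mul_mod_self_left]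
  rcases hx with hx | hx
  · rw [hx, Nat.mod_eq_of_lt he]
  · rw [hx, Nat.add_mod_right, Nat.mod_eq_of_lt he]

lemma zero_iff (m i : ℕ) : i % (3 * m + 2) % 3 = 0 → (i * (m + 1) + 0) % (3 * m + 2) < m + 1 := by
  intro h
  have hlt := Nat.mod_lt i (show 0 < 3 * m + 2 by omega)
  rw [mod_form m i 0 (i % (3 * m + 2) / 3) (by omega) (by left; rw [h]; ring)]
  omega

lemma one_iff (m i : ℕ) : i % (3 * m + 2) % 3 = 1 →
    (i * (m + 1) + (2 * m + 1)) % (3 * m + 2) < m + 1 := by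
  intro h
  have hlt := Nat.mod_lt i (show 0 < 3 * m + 2 by omega)
  rw [mod_form m i (2 * m + 1) (i % (3 * m + 2) / 3) (by omega) (by right; rw [h]; ring)]
  omega

lemma two_iff (m i : ℕ) : i % (3 * m + 2) % 3 = 2 →
    (i * (m + 1) + m) % (3 * m + 2) < m + 1 := by
  intro h
  have hlt := Nat.mod_lt i (show 0 < 3 * m + 2 by omega)
  rw [mod_form m i m (i % (3 * m + 2) / 3) (by omega) (by right; rw [h]; ring)]
  omega

/-- count bound from rotation -/
lemma cnt_le_crit_of_rot (m x : ℕ) (c : ℝ × ℝ) (d : ℕ → ℝ × ℝ)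
    (h : ∀ i, d i = c → (i * (m + 1) + x) % (3 * m + 2) < m + 1) (s n : ℕ) :
    cnt (ind c d s) n ≤ crit m n := by
  refine le_trans ?_ (rot_count_le m (s * (m + 1) + x) n)
  refine Finset.sum_le_sum fun i _ => ?_
  unfold ind
  have := h (s + i)
  rw [show (s + i) * (m + 1) + x = i * (m + 1) + (s * (m + 1) + x) by ring] at this
  split_ifs <;> first | omega | (exfalso; tauto)

lemma val_lt_of_cnt {β : ℝ} (hβ : 1 < β) (m : ℕ) (hW : wsum β⁻¹ (crit m) < 1) (c d n)
    (h : ∀ k, cnt (ind c d n) k ≤ crit m k) : val β⁻¹ (ind c d n) < 1 := by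
  have hx0 : 0 < β⁻¹ := by positivity
  have hx1 : β⁻¹ < 1 := inv_lt_one_of_one_lt₀ hβ
  rw [val_eq_wsum hx0 hx1 _ (ind_le c d n)]
  exact (wsum_mono hx0 hx1 _ _ h (crit_le m)).trans_lt hW

lemma next_state (m i : ℕ) :
    ((i + 1) % (3 * m + 2) = i % (3 * m + 2) + 1 ∧ (i + 1) / (3 * m + 2) = i / (3 * m + 2)) ∨
    (i % (3 * m + 2) = 3 * m + 1 ∧ (i + 1) % (3 * m + 2) = 0 ∧
      (i + 1) / (3 * m + 2) = i / (3 * m + 2) + 1) := by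
  have hK : 0 < 3 * m + 2 := by omega
  have h1 := Nat.mod_add_div i (3 * m + 2)
  have hlt := Nat.mod_lt i hK
  generalize i % (3 * m + 2) = r at *
  generalize i / (3 * m + 2) = q at *
  by_cases hr : r + 1 < 3 * m + 2
  · left
    have e : i + 1 = (r + 1) + (3 * m + 2) * q := by omega
    rw [e, Nat.add_mul_mod_self_left, Nat.add_mul_div_left _ _ hK, Nat.mod_eq_of_lt hr,
      Nat.div_eq_of_lt hr]
    simp
  · right
    have e : i + 1 = (3 * m + 2) * (q + 1) := by rw [Nat.mul_succ]; omega
    rw [e, Nat.mul_mod_right, Nat.mul_div_cancel_left _ hK]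
    exact ⟨by omega, rfl, rfl⟩

lemma s2_gap (m i : ℕ) : (s2 m i ≠ 0 → s2 m i ≠ s2 m (i + 1) ∧ s2 m i ≠ s2 m (i + 2)) := by
  unfold s2 sym
  have h1 := next_state m i
  have h2 := next_state m (i + 1)
  rw [show i + 1 + 1 = i + 2 by rfl] at h2
  have hlt := Nat.mod_lt i (show 0 < 3 * m + 2 by omega)
  have hlt1 := Nat.mod_lt (i + 1) (show 0 < 3 * m + 2 by omega)
  have hlt2 := Nat.mod_lt (i + 2) (show 0 < 3 * m + 2 by omega)
  generalize i % (3 * m + 2) = r at *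
  generalize (i + 1) % (3 * m + 2) = r1 at *
  generalize (i + 2) % (3 * m + 2) = r2 at *
  generalize i / (3 * m + 2) = q at *
  generalize (i + 1) / (3 * m + 2) = q1 at *
  generalize (i + 2) / (3 * m + 2) = q2 at *
  intro h
  rcases h1 with ⟨rfl, rfl⟩ | ⟨h1, rfl, rfl⟩ <;> rcases h2 with ⟨rfl, rfl⟩ | ⟨h2, rfl, rfl⟩ <;>
    (split_ifs at * <;> omega)

/-- the marker pattern `0?0` occurs exactly at residue `3m`. -/
lemma marker (m i : ℕ) (hi : i % (3 * m + 2) % 3 = 0) (hi2 : (i + 2) % (3 * m + 2) % 3 = 0) :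
    i % (3 * m + 2) = 3 * m := by
  have h1 := next_state m i
  have h2 := next_state m (i + 1)
  rw [show i + 1 + 1 = i + 2 by rfl] at h2
  have hlt := Nat.mod_lt i (show 0 < 3 * m + 2 by omega)
  omega

lemma sym_zero (v r : ℕ) (hv : v < 2) : sym v r = 0 ↔ r % 3 = 0 := by
  unfold sym; split_ifs <;> omega

/-- any period is a multiple of `3m+2`. -/
lemma period_dvd (m j : ℕ) (s : ℕ → ℕ) (hs : ∀ i, s i = 0 ↔ i % (3 * m + 2) % 3 = 0)
    (hj : ∀ i, s (i + j) = s i) : (3 * m + 2) ∣ j := by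
  have a1 : s (3 * m) = 0 := by
    rw [hs, Nat.mod_eq_of_lt (show 3 * m < 3 * m + 2 by omega)]; omega
  have a2 : s (3 * m + 2) = 0 := by rw [hs]; simp
  have b1 := (hs _).1 ((hj (3 * m)).trans a1)
  have b2 := (hs _).1 ((hj (3 * m + 2)).trans a2)
  rw [show 3 * m + 2 + j = 3 * m + j + 2 by ring] at b2
  have h := marker m (3 * m + j) b1 b2
  have h2 : 3 * m + j ≡ 3 * m + 0 [MOD 3 * m + 2] := by
    show _ % _ = _ % _
    rw [h, add_zero, Nat.mod_eq_of_lt (by omega)]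
  exact (Nat.modEq_zero_iff_dvd).1 (Nat.ModEq.add_left_cancel' _ h2)

lemma smallest_emb (s : ℕ → ℕ) (hle : ∀ i, s i ≤ 2) (k : ℕ) (h : SmallestPeriod s k) :
    SmallestPeriod (fun i => emb (s i)) k := by
  refine ⟨h.1, fun i => by simp only [h.2.1 i], fun j hj hjk => ?_⟩
  obtain ⟨i, hi⟩ := h.2.2 j hj hjk
  exact ⟨i, fun he => hi (emb_inj _ _ (hle _) (hle _) he)⟩

lemma s1_zero (m i : ℕ) : s1 m i = 0 ↔ i % (3 * m + 2) % 3 = 0 := sym_zero _ _ (by omega)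
lemma s2_zero (m i : ℕ) : s2 m i = 0 ↔ i % (3 * m + 2) % 3 = 0 := sym_zero _ _ (by omega)

lemma s1_smallest (m : ℕ) : SmallestPeriod (s1 m) (3 * m + 2) := by
  refine ⟨by omega, fun i => by simp [s1], fun j hj hjk => ?_⟩
  by_contra! hcon
  have := Nat.le_of_dvd hj (period_dvd m j (s1 m) (s1_zero m) hcon)
  omega

lemma s2_smallest (m : ℕ) : SmallestPeriod (s2 m) (6 * m + 4) := by
  have hK : 0 < 3 * m + 2 := by omega
  refine ⟨by omega, fun i => ?_, fun j hj hjk => ?_⟩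
  · unfold s2
    rw [show i + (6 * m + 4) = i + (3 * m + 2) * 2 by ring, Nat.add_mul_mod_self_left,
      Nat.add_mul_div_left _ _ hK, Nat.add_mod_right]
  · by_contra! hcon
    obtain ⟨q, hq⟩ := period_dvd m j (s2 m) (s2_zero m) hcon
    have hq1 : q = 1 := by
      have h1 : q < 2 := by by_contra! h; nlinarith
      have h2 : q ≠ 0 := by rintro rfl; omega
      omega
    subst hq1
    have h := hcon (3 * m + 1)
    rw [hq] at h
    unfold s2 at h
    rw [Nat.add_mul_mod_self_left, Nat.add_mul_div_left _ _ hK, Nat.mod_eq_of_lt (show 3 * m + 1 < 3 * m + 2 by omega),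
      Nat.div_eq_of_lt (show 3 * m + 1 < 3 * m + 2 by omega)] at h
    unfold sym at h
    have : (3 * m + 1) % 3 = 1 := by omega
    simp [this] at h

lemma partB1 {β : ℝ} (hβ : 1 < β) (m : ℕ) (hW : wsum β⁻¹ (crit m) < 1) :
    (fun i => emb (s1 m i)) ∈ Ufat β := by
  refine mem_U hβ _ (fun i => emb_mem _) fun c hc n => val_lt_of_cnt hβ m hW _ _ _ fun k => ?_
  have hs : ∀ i, s1 m i = i % (3 * m + 2) % 3 := by
    intro i; unfold s1 sym; split_ifs <;> omega
  rcases hc with rfl | rfl | rfl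
  · refine cnt_le_crit_of_rot m 0 _ _ (fun i hi => zero_iff m i ?_) n k
    rw [← hs]; exact emb_inj _ 0 (s1_le m i) (by omega) hi
  · refine cnt_le_crit_of_rot m (2 * m + 1) _ _ (fun i hi => one_iff m i ?_) n k
    rw [← hs]; exact emb_inj _ 1 (s1_le m i) (by omega) hi
  · refine cnt_le_crit_of_rot m m _ _ (fun i hi => two_iff m i ?_) n k
    rw [← hs]; exact emb_inj _ 2 (s1_le m i) (by omega) hi

lemma partB2 {β : ℝ} (hβ : 1 < β) (m : ℕ) (hW : wsum β⁻¹ (crit m) < 1) :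
    (fun i => emb (s2 m i)) ∈ Ufat β := by
  refine mem_U hβ _ (fun i => emb_mem _) fun c hc n => val_lt_of_cnt hβ m hW _ _ _ fun k => ?_
  have gap : ∀ e : ℕ, e ≤ 2 → e ≠ 0 →
      cnt (ind (emb e) (fun i => emb (s2 m i)) n) k ≤ crit m k := by
    intro e he he0
    refine gap_count_le m _ (fun i => ?_) k
    have hiff : ∀ i, emb (s2 m i) = emb e ↔ s2 m i = e := fun i =>
      ⟨fun h => emb_inj _ _ (s2_le m i) he h, fun h => by rw [h]⟩
    simp only [ind, hiff]
    have g1 := s2_gap m (n + i)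
    have g2 := s2_gap m (n + i + 1)
    simp only [← add_assoc] at *
    rw [show n + i + 1 + 1 = n + i + 2 by rfl] at g2
    split_ifs <;> omega
  rcases hc with rfl | rfl | rfl
  · refine cnt_le_crit_of_rot m 0 _ _ (fun i hi => zero_iff m i ?_) n k
    rw [← s2_zero]; exact emb_inj _ 0 (s2_le m i) (by omega) hi
  · exact gap 1 (by omega) (by omega)
  · exact gap 2 (by omega) (by omega)

lemma main_iff (m : ℕ) (β : ℝ) (hβ : β ∈ Set.Ioc (1 : ℝ) 2) :
    (∃ d ∈ Ufat β, SmallestPeriod d (6 * m + 4)) ↔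
      (∃ d ∈ Ufat β, SmallestPeriod d (3 * m + 2)) := by
  constructor
  · rintro ⟨d, hd, hp⟩
    have hW := partA hβ.1 hβ.2 m 2 (Or.inr rfl) d hd
      (by rwa [show (3 * m + 2) * 2 = 6 * m + 4 by ring])
    exact ⟨_, partB1 hβ.1 m hW, smallest_emb _ (s1_le m) _ (s1_smallest m)⟩
  · rintro ⟨d, hd, hp⟩
    have hW := partA hβ.1 hβ.2 m 1 (Or.inl rfl) d hd (by rwa [mul_one])
    exact ⟨_, partB2 hβ.1 m hW, smallest_emb _ (s2_le m) _ (s2_smallest m)⟩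

/-- β_{6m+4} = β_{3m+2} for every m ≥ 0; consequently for every β ∈ (1,2]
strictly above the common critical base, if 𝐔_β contains a sequence of
smallest period 3m+2 then it contains one of smallest period 6m+4. -/
theorem stmt6 (m : ℕ) :
    FatSierpinski.betaK (6 * m + 4) = FatSierpinski.betaK (3 * m + 2) ∧
    ∀ β ∈ Set.Ioc (1 : ℝ) 2, FatSierpinski.betaK (3 * m + 2) < β →
      (∃ d ∈ FatSierpinski.Ufat β, FatSierpinski.SmallestPeriod d (3 * m + 2)) →
      ∃ d ∈ FatSierpinski.Ufat β, FatSierpinski.SmallestPeriod d (6 * m + 4) := by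
  refine ⟨?_, fun β hβ _ h => (main_iff m β hβ).2 h⟩
  unfold betaK
  congr 1
  ext β
  exact and_congr_right fun hβ => main_iff m β hβ

end FatSierpinski
end
end

section
/- The sequence n ↦ β̂_n (n ≥ 0) is strictly decreasing and converges to β_c as n → ∞. -/
open Filter Set

noncomputable section

namespace FatSierpinski

/-! ### Digits of the blocks -/

theorem plusBlock_length (w : List ℕ) (h : 0 < w.length) : (plusBlock w).length = w.length := by
  simp [plusBlock]; omega

theorem thetaBlock_length (w : List ℕ) : (thetaBlock w).length = w.length := by
  simp [thetaBlock]

theorem tB_length (n : ℕ) : (tB n).length = 3 * 2 ^ n := by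
  induction n with
  | zero => simp [tB]
  | succ n ih =>
    have hp : 0 < (tB n).length := by rw [ih]; positivity
    simp only [tB, List.length_append, thetaBlock_length, plusBlock_length _ hp, ih, pow_succ]
    ring

theorem plus_getD_lt (w : List ℕ) (i : ℕ) (h : i + 1 < w.length) :
    (plusBlock w).getD i 0 = w.getD i 0 := by
  have h1 : i < w.length - 1 := by omega
  have h2 : i < w.length := by omega
  simp [plusBlock, List.getElem?_append, h1, h2]

theorem plus_getD_last (w : List ℕ) (i : ℕ) (h : i + 1 = w.length) :
    (plusBlock w).getD i 0 = 1 := by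
  have h1 : i = w.length - 1 := by omega
  subst h1
  simp [plusBlock, List.getElem?_append]

def thd (i x : ℕ) : ℕ := if i % 3 = 1 then x else 1 - x

theorem theta_getD (w : List ℕ) (i : ℕ) (h : i < w.length) :
    (thetaBlock w).getD i 0 = thd i (w.getD i 0) := by
  simp [thetaBlock, thd, h]

theorem tB_succ_lt (n i : ℕ) (h : i < 3 * 2 ^ n) :
    (tB (n + 1)).getD i 0 = (plusBlock (tB n)).getD i 0 := by
  have hl : (plusBlock (tB n)).length = 3 * 2 ^ n := by
    rw [plusBlock_length, tB_length]; rw [tB_length]; positivity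
  rw [tB, List.getD_append]
  omega

theorem tB_succ_ge (n i : ℕ) (h : i < 3 * 2 ^ n) :
    (tB (n + 1)).getD (3 * 2 ^ n + i) 0 = thd i ((plusBlock (tB n)).getD i 0) := by
  have hl : (plusBlock (tB n)).length = 3 * 2 ^ n := by
    rw [plusBlock_length, tB_length]; rw [tB_length]; positivity
  rw [tB, List.getD_append_right _ _ _ _ (by omega), hl, Nat.add_sub_cancel_left, theta_getD]
  omega

theorem tB_last (n i : ℕ) (h : i + 1 = 3 * 2 ^ n) : (tB n).getD i 0 = 0 := by
  cases n with
  | zero =>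
    have : i = 2 := by simpa using h
    subst this
    simp [tB]
  | succ n =>
    have hp : 0 < 2 ^ n := by positivity
    have e : i = 3 * 2 ^ n + (3 * 2 ^ n - 1) := by rw [pow_succ] at h; omega
    rw [e, tB_succ_ge _ _ (by omega), plus_getD_last _ _ (by rw [tB_length]; omega), thd,
      if_neg (by omega)]

theorem hat_lt (n i : ℕ) (h : i < 3 * 2 ^ (n + 1)) :
    hatSeq n i = (plusBlock (tB (n + 1))).getD i 0 := by
  have hl : (plusBlock (tB (n+1))).length = 3 * 2 ^ (n+1) := by
    rw [plusBlock_length, tB_length]; rw [tB_length]; positivity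
  simp only [hatSeq, prefixPeriodic, hl, if_pos h]

theorem hat_ge (n i j : ℕ) (h : i < 3 * 2 ^ (n + 1)) :
    hatSeq n (3 * 2 ^ (n + 1) + 3 * 2 ^ (n + 1) * j + i) = thd i ((tB (n + 1)).getD i 0) := by
  have hl : (plusBlock (tB (n+1))).length = 3 * 2 ^ (n+1) := by
    rw [plusBlock_length, tB_length]; rw [tB_length]; positivity
  have h2 : ¬ (3 * 2 ^ (n + 1) + 3 * 2 ^ (n + 1) * j + i < 3 * 2 ^ (n+1)) := by
    rw [Nat.add_assoc]; omega
  simp only [hatSeq, prefixPeriodic, hl, if_neg h2, thetaBlock_length, tB_length]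
  rw [Nat.add_assoc, Nat.add_sub_cancel_left, Nat.mul_add_mod, Nat.mod_eq_of_lt h, theta_getD]
  rw [tB_length]; exact h

theorem hat_seqLT (n : ℕ) : seqLT (hatSeq (n + 1)) (hatSeq n) := by
  obtain ⟨M, hM⟩ : ∃ M, 2 ^ (n + 1) = M := ⟨_, rfl⟩
  have hMp : 0 < M := by rw [← hM]; positivity
  have hM2 : 2 ^ (n + 1 + 1) = 2 * M := by rw [pow_succ, hM]; ring
  have hg := hat_ge n
  have hg' := hat_ge (n + 1)
  have hl' := hat_lt (n + 1)
  have hl := hat_lt n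
  have ts := tB_succ_lt (n + 1)
  have tg := tB_succ_ge (n + 1)
  have tl := tB_last (n + 1)
  have len := tB_length (n + 1)
  have len' := tB_length (n + 1 + 1)
  have pl := plus_getD_lt (tB (n + 1))
  have pl' := plus_getD_lt (tB (n + 1 + 1))
  have pe := plus_getD_last (tB (n + 1))
  have pe' := plus_getD_last (tB (n + 1 + 1))
  rw [len] at pl pe
  rw [len'] at pl' pe'
  rw [hM2] at hg' hl' pl' pe'
  rw [hM] at hg hl ts tg tl pl pe
  refine ⟨3 * (3 * M) - 1, ?_, ?_⟩
  · intro i hi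
    rcases lt_or_ge i (3 * M) with h1 | h1
    · rw [hl' i (by omega), hl i h1, pl' i (by omega), ts i h1]
    rcases lt_or_ge (i + 1) (2 * (3 * M)) with h2 | h2
    · obtain ⟨j, rfl⟩ := Nat.exists_eq_add_of_le h1
      have := hg j 0 (by omega)
      rw [Nat.mul_zero, Nat.add_zero] at this
      rw [this, hl' _ (by omega), pl' _ (by omega), tg j (by omega), pl j (by omega)]
    rcases lt_or_ge i (2 * (3 * M)) with h3 | h3
    · have := hg (3 * M - 1) 0 (by omega)
      rw [Nat.mul_zero, Nat.add_zero, tl _ (by omega), thd, if_neg (by omega),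
        show 3 * M + (3 * M - 1) = i by omega] at this
      rw [this, hl' _ (by omega), pe' _ (by omega)]
    · obtain ⟨j, rfl⟩ := Nat.exists_eq_add_of_le h3
      have e1 := hg j 1 (by omega)
      have e2 := hg' j 0 (by omega)
      rw [show 3 * M + 3 * M * 1 + j = 2 * (3 * M) + j by ring] at e1
      rw [show 3 * (2 * M) + 3 * (2 * M) * 0 + j = 2 * (3 * M) + j by ring] at e2
      rw [e1, e2, ts j (by omega), pl j (by omega)]
  · have e1 := hg (3 * M - 1) 1 (by omega)
    have e2 := hg' (3 * M - 1) 0 (by omega)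
    rw [show 3 * M + 3 * M * 1 + (3 * M - 1) = 3 * (3 * M) - 1 by omega] at e1
    rw [show 3 * (2 * M) + 3 * (2 * M) * 0 + (3 * M - 1) = 3 * (3 * M) - 1 by omega] at e2
    rw [e1, e2, ts _ (by omega), pe _ (by omega), tl _ (by omega)]
    simp only [thd]
    rw [if_neg (by omega), if_neg (by omega)]
    omega

theorem plus_mono (n i k : ℕ) (h : i < 3 * 2 ^ n) :
    (plusBlock (tB (n + k))).getD i 0 = (plusBlock (tB n)).getD i 0 := by
  induction k with
  | zero => rfl
  | succ k ih =>
    have h1 : 2 ^ n ≤ 2 ^ (n + k) := Nat.pow_le_pow_right (by norm_num) (by omega)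
    have h2 : 2 ^ (n + k + 1) = 2 * 2 ^ (n + k) := by ring
    rw [← ih, ← Nat.add_assoc, plus_getD_lt, tB_succ_lt _ _ (by omega)]
    rw [tB_length]; omega

theorem lam_eq (i : ℕ) : lamSeq i = (plusBlock (tB i)).getD i 0 := by
  have : i < 2 ^ i := Nat.lt_two_pow_self
  rw [lamSeq, tB_succ_lt _ _ (by omega)]

theorem hat_eq_lam (n i : ℕ) (h : i < 3 * 2 ^ (n + 1)) : hatSeq n i = lamSeq i := by
  have h1 : i < 2 ^ i := Nat.lt_two_pow_self
  rw [hat_lt _ _ h, lam_eq, ← plus_mono (n + 1) i i h, ← plus_mono i i (n + 1) (by omega),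
    Nat.add_comm]

theorem lam_zero : lamSeq 0 = 1 := by
  simp [lamSeq, tB, plusBlock]

theorem lam_two : lamSeq 2 = 1 := by
  rw [← hat_eq_lam 0 2 (by norm_num), hat_lt _ _ (by norm_num)]
  simp [tB, plusBlock, thetaBlock]

theorem lam_binary (h : ∀ n, IsBinary (hatSeq n)) : IsBinary lamSeq := by
  intro i
  have h1 : i < 2 ^ i := Nat.lt_two_pow_self
  rw [← hat_eq_lam i i (by rw [pow_succ]; omega)]
  exact h i i

/-! ### Analysis -/

theorem summable_geom {b : ℝ} (hb : 1 < b) : Summable fun i : ℕ => 1 / b ^ (i + 1) := by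
  have := (summable_geometric_of_lt_one (r := b⁻¹) (by positivity) (inv_lt_one_of_one_lt₀ hb))
  refine (this.mul_left b⁻¹).congr fun i => ?_
  rw [pow_succ, one_div, mul_inv, inv_pow, mul_comm]

theorem tsum_geom {b : ℝ} (hb : 1 < b) : ∑' i : ℕ, 1 / b ^ (i + 1) = 1 / (b - 1) := by
  have h := (hasSum_geometric_of_lt_one (r := b⁻¹) (by positivity)
    (inv_lt_one_of_one_lt₀ hb)).mul_left b⁻¹
  have h2 : b⁻¹ * (1 - b⁻¹)⁻¹ = 1 / (b - 1) := by
    have : b - 1 ≠ 0 := by linarith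
    have : b ≠ 0 := by linarith
    rw [← mul_inv, one_div]; congr 1; field_simp
  rw [← h2, ← h.tsum_eq]
  refine tsum_congr fun i => ?_
  rw [pow_succ, one_div, mul_inv, inv_pow, mul_comm]

theorem term_le {b : ℝ} (hb : 1 < b) {a : ℕ → ℕ} (ha : IsBinary a) (i : ℕ) :
    (a i : ℝ) / b ^ (i + 1) ≤ 1 / b ^ (i + 1) := by
  have : (a i : ℝ) ≤ 1 := by exact_mod_cast ha i
  gcongr

theorem summable_a {b : ℝ} (hb : 1 < b) {a : ℕ → ℕ} (ha : IsBinary a) :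
    Summable fun i : ℕ => (a i : ℝ) / b ^ (i + 1) :=
  Summable.of_nonneg_of_le (fun i => by positivity) (term_le hb ha) (summable_geom hb)

/-- remainders of the quasi-greedy expansion of `r` -/
def rem (b r : ℝ) : ℕ → ℝ
  | 0 => r
  | k + 1 => b * rem b r k - (if 1 < b * rem b r k then 1 else 0)

open Classical in
/-- digits of the quasi-greedy expansion of `r` -/
def dig (b r : ℝ) (k : ℕ) : ℕ := if 1 < b * rem b r k then 1 else 0

theorem rem_succ (b r : ℝ) (k : ℕ) : rem b r (k + 1) = b * rem b r k - dig b r k := by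
  simp only [rem, dig]; split_ifs <;> simp

theorem rem_bd {b r : ℝ} (hb : 1 < b) (hb2 : b ≤ 2) (h0 : 0 < r) (h1 : r ≤ 1 / (b - 1)) (k : ℕ) :
    0 < rem b r k ∧ rem b r k ≤ 1 / (b - 1) := by
  induction k with
  | zero => exact ⟨h0, h1⟩
  | succ k ih =>
    obtain ⟨ih0, ih1⟩ := ih
    have hb1 : 0 < b - 1 := by linarith
    have hge : 1 ≤ 1 / (b - 1) := by rw [le_div_iff₀ hb1]; linarith
    have hid : b * (1 / (b - 1)) = 1 / (b - 1) + 1 := by field_simp; ring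
    have hbr : b * rem b r k ≤ b * (1 / (b - 1)) := by gcongr
    simp only [rem]
    split_ifs with h
    · constructor <;> linarith
    · constructor
      · have : 0 < b * rem b r k := by positivity
        linarith
      · linarith

theorem rem_sum {b r : ℝ} (hb : 1 < b) (k : ℕ) :
    ∑ i ∈ Finset.range k, (dig b r i : ℝ) / b ^ (i + 1) = r - rem b r k / b ^ k := by
  induction k with
  | zero => simp [rem]
  | succ k ih =>
    rw [Finset.sum_range_succ, ih, rem_succ]
    field_simp
    ring

theorem dig_binary (b r : ℝ) : IsBinary (dig b r) := by
  intro i; simp only [dig]; split_ifs <;> simp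

theorem dig_sum {b r : ℝ} (hb : 1 < b) (hb2 : b ≤ 2) (h0 : 0 < r) (h1 : r ≤ 1 / (b - 1)) :
    ∑' i : ℕ, (dig b r i : ℝ) / b ^ (i + 1) = r := by
  have hs := (summable_a hb (dig_binary b r)).hasSum.tendsto_sum_nat
  refine tendsto_nhds_unique hs ?_
  simp_rw [rem_sum hb]
  have : Tendsto (fun k => rem b r k / b ^ k) atTop (nhds 0) := by
    have h2 : Tendsto (fun k : ℕ => (1 / (b - 1)) * (b⁻¹) ^ k) atTop (nhds ((1 / (b - 1)) * 0)) :=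
      (tendsto_pow_atTop_nhds_zero_of_lt_one (by positivity)
        (inv_lt_one_of_one_lt₀ hb)).const_mul _
    rw [mul_zero] at h2
    refine squeeze_zero (fun k => ?_) (fun k => ?_) h2
    · have := (rem_bd hb hb2 h0 h1 k).1
      positivity
    · have := (rem_bd hb hb2 h0 h1 k).2
      rw [inv_pow, ← div_eq_mul_inv]
      gcongr
  simpa using this.const_sub r

theorem dig_notEnd {b r : ℝ} (hb : 1 < b) (hb2 : b ≤ 2) (h0 : 0 < r) (h1 : r ≤ 1 / (b - 1)) :
    NotEndInZeros (dig b r) := by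
  intro N
  by_contra! hcon
  have hr : ∀ k, rem b r (N + k) = b ^ k * rem b r N := by
    intro k
    induction k with
    | zero => simp
    | succ k ih =>
      rw [← Nat.add_assoc, rem_succ, ih, hcon _ (by omega)]
      push_cast; ring
  have hN := (rem_bd hb hb2 h0 h1 N).1
  obtain ⟨k, hk⟩ := pow_unbounded_of_one_lt ((1 / (b - 1)) / rem b r N) hb
  rw [div_lt_iff₀ hN, ← hr] at hk
  exact absurd (rem_bd hb hb2 h0 h1 (N + k)).2 (not_le.mpr hk)

theorem split_sum {b : ℝ} (hb : 1 < b) {a : ℕ → ℕ} (ha : IsBinary a) (m : ℕ) :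
    ∑' i : ℕ, (a i : ℝ) / b ^ (i + 1) = ∑ i ∈ Finset.range m, (a i : ℝ) / b ^ (i + 1)
      + (∑' i : ℕ, (a (i + m) : ℝ) / b ^ (i + 1)) / b ^ m := by
  rw [← (summable_a hb ha).sum_add_tsum_nat_add m, ← tsum_div_const]
  congr 1
  refine tsum_congr fun i => ?_
  rw [div_div, ← pow_add]
  congr 2
  ring

theorem binary_shift {a : ℕ → ℕ} (ha : IsBinary a) (m : ℕ) : IsBinary fun i => a (i + m) :=
  fun i => ha _

theorem tail_le {b : ℝ} (hb : 1 < b) {a : ℕ → ℕ} (ha : IsBinary a) :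
    ∑' i : ℕ, (a i : ℝ) / b ^ (i + 1) ≤ 1 / (b - 1) := by
  rw [← tsum_geom hb]
  exact (summable_a hb ha).tsum_le_tsum (term_le hb ha) (summable_geom hb)

theorem tail_nonneg {b : ℝ} (hb : 1 < b) (a : ℕ → ℕ) :
    0 ≤ ∑' i : ℕ, (a i : ℝ) / b ^ (i + 1) :=
  tsum_nonneg fun i => by positivity

theorem tail_pos {b : ℝ} (hb : 1 < b) {a : ℕ → ℕ} (ha : IsBinary a) (hz : NotEndInZeros a)
    (m : ℕ) : 0 < ∑' i : ℕ, (a (i + m) : ℝ) / b ^ (i + 1) := by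
  obtain ⟨j, hj, hne⟩ := hz m
  refine (summable_a hb (binary_shift ha m)).tsum_pos (fun i => by positivity) (j - m) ?_
  rw [Nat.sub_add_cancel hj]
  have : (0 : ℝ) < a j := by exact_mod_cast Nat.pos_of_ne_zero hne
  positivity

/-- lexicographic monotonicity of the quasi-greedy expansion -/
theorem qg_lt {b c : ℝ} (hb : 1 < b) (hb2 : b ≤ 2) (hc : 1 < c) {x y : ℕ → ℕ}
    (hx : IsQuasiGreedy b x) (hy : IsQuasiGreedy c y) (hlt : seqLT x y) : b < c := by
  by_contra! hcb
  obtain ⟨xb, xz, xs, xmax⟩ := hx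
  obtain ⟨yb, yz, ys, -⟩ := hy
  obtain ⟨n, heq, hn⟩ := hlt
  have hyn : y n = 1 := by have := yb n; omega
  have hxn : x n = 0 := by have := yb n; omega
  have hys : ∑' i : ℕ, (y i : ℝ) / b ^ (i + 1) ≤ 1 := by
    rw [← ys]
    refine (summable_a hb yb).tsum_le_tsum (fun i => ?_) (summable_a hc yb)
    gcongr
  have hypos := tail_pos hb yb yz (n + 1)
  have hxtl := tail_le hb (binary_shift xb (n + 1))
  have e1 := split_sum hb yb (n + 1)
  have e2 := split_sum hb xb (n + 1)
  unfold SumsToOne at xs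
  rw [xs] at e2
  have hbn : 0 < b ^ (n + 1) := by positivity
  have esum : ∑ i ∈ Finset.range n, (x i : ℝ) / b ^ (i + 1)
      = ∑ i ∈ Finset.range n, (y i : ℝ) / b ^ (i + 1) :=
    Finset.sum_congr rfl fun i hi => by rw [heq i (Finset.mem_range.mp hi)]
  rw [Finset.sum_range_succ, hyn] at e1
  rw [Finset.sum_range_succ, hxn, esum] at e2
  set P := ∑ i ∈ Finset.range n, (y i : ℝ) / b ^ (i + 1) with hP
  set TY := ∑' i : ℕ, (y (i + (n + 1)) : ℝ) / b ^ (i + 1)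
  set TX := ∑' i : ℕ, (x (i + (n + 1)) : ℝ) / b ^ (i + 1)
  have hTX : TX = b ^ (n + 1) * (1 - P) := by
    rw [e2]; push_cast; field_simp; ring
  have hr0 : 0 < TX - 1 := by
    have : 0 < TY / b ^ (n + 1) := by positivity
    have h3 : 1 / b ^ (n + 1) < 1 - P := by push_cast at e1; linarith
    rw [div_lt_iff₀ hbn] at h3
    rw [hTX]; linarith
  have hr1 : TX - 1 ≤ 1 / (b - 1) := by linarith
  let z : ℕ → ℕ := fun i => if i < n + 1 then y i else dig b (TX - 1) (i - (n + 1))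
  have zb : IsBinary z := by
    intro i; simp only [z]; split_ifs
    · exact yb i
    · exact dig_binary _ _ _
  have zsh : ∀ i, z (i + (n + 1)) = dig b (TX - 1) i := by
    intro i; simp only [z]; rw [if_neg (by omega), Nat.add_sub_cancel]
  have zz : NotEndInZeros z := by
    intro N
    obtain ⟨i, hi, hne⟩ := dig_notEnd hb hb2 hr0 hr1 N
    exact ⟨i + (n + 1), by omega, by rw [zsh]; exact hne⟩
  have zs : SumsToOne b z := by
    unfold SumsToOne
    rw [split_sum hb zb (n + 1)]
    simp_rw [zsh]
    rw [dig_sum hb hb2 hr0 hr1]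
    have : ∑ i ∈ Finset.range (n + 1), (z i : ℝ) / b ^ (i + 1)
        = ∑ i ∈ Finset.range (n + 1), (y i : ℝ) / b ^ (i + 1) :=
      Finset.sum_congr rfl fun i hi => by simp only [z]; rw [if_pos (Finset.mem_range.mp hi)]
    rw [this, Finset.sum_range_succ, hyn, ← hP, hTX]
    push_cast; field_simp; ring
  have hzlt : ∀ i < n, z i = x i := fun i hi => by
    simp only [z]; rw [if_pos (by omega), heq i hi]
  have hzn : z n = 1 := by simp only [z]; rw [if_pos (by omega), hyn]
  rcases xmax z zb zz zs with ⟨m, hm, hmlt⟩ | he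
  · rcases lt_trichotomy m n with h | h | h
    · rw [hzlt m h] at hmlt; omega
    · subst h; omega
    · have := hm n h; omega
  · rw [he] at hzn; omega

theorem base_ge {b : ℝ} (hb : 1 < b) {a : ℕ → ℕ} (ha : IsBinary a) (h0 : a 0 = 1) (h2 : a 2 = 1)
    (hs : SumsToOne b a) : 7 / 5 ≤ b := by
  have h := (summable_a hb ha).sum_le_tsum (Finset.range 3) (fun i _ => by positivity)
  rw [hs] at h
  simp only [Finset.sum_range_succ, Finset.sum_range_zero, h0, h2] at h
  have h1 : 0 ≤ (a 1 : ℝ) / b ^ (1 + 1) := by positivity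
  have h3 : 1 / b + 1 / b ^ 3 ≤ 1 := by
    push_cast at h
    norm_num at h h1 ⊢
    linarith
  by_contra! hlt
  have h4 : b ^ 2 + 1 ≤ b ^ 3 := by
    have : 1 / b + 1 / b ^ 3 = (b ^ 2 + 1) / b ^ 3 := by field_simp
    rw [this, div_le_one (by positivity)] at h3
    exact h3
  nlinarith [mul_pos (sub_pos.mpr hb) (sub_pos.mpr hlt), mul_pos (mul_pos (sub_pos.mpr hb) (sub_pos.mpr hlt)) (sub_pos.mpr hb)]

/-- comparing values of one expansion in two bases -/
theorem base_diff {b c : ℝ} (hb : 1 < b) (hbc : b ≤ c) {a : ℕ → ℕ} (ha : IsBinary a)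
    (h0 : a 0 = 1) :
    1 / b - 1 / c ≤ ∑' i : ℕ, (a i : ℝ) / b ^ (i + 1) - ∑' i : ℕ, (a i : ℝ) / c ^ (i + 1) := by
  have hc : 1 < c := by linarith
  rw [← (summable_a hb ha).tsum_sub (summable_a hc ha)]
  have h := ((summable_a hb ha).sub (summable_a hc ha)).le_tsum 0 (fun i _ => by
    rw [sub_nonneg]; gcongr)
  simpa [h0] using h

theorem base_diff_abs {b c : ℝ} (hb : 1 < b) (hc : 1 < c) {a : ℕ → ℕ} (ha : IsBinary a)
    (h0 : a 0 = 1) :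
    |1 / b - 1 / c| ≤
      |∑' i : ℕ, (a i : ℝ) / b ^ (i + 1) - ∑' i : ℕ, (a i : ℝ) / c ^ (i + 1)| := by
  rcases le_total b c with h | h
  · have h1 := base_diff hb h ha h0
    have h2 : 0 ≤ 1 / b - 1 / c := by rw [sub_nonneg]; gcongr
    rw [abs_of_nonneg h2]
    exact h1.trans (le_abs_self _)
  · have h1 := base_diff hc h ha h0
    have h2 : 0 ≤ 1 / c - 1 / b := by rw [sub_nonneg]; gcongr
    rw [abs_sub_comm, abs_of_nonneg h2, abs_sub_comm]
    exact h1.trans (le_abs_self _)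

/-- expansions agreeing on the first `m` digits have close values -/
theorem agree_diff {b : ℝ} (hb : 7 / 5 ≤ b) {x y : ℕ → ℕ} (hx : IsBinary x) (hy : IsBinary y)
    (m : ℕ) (h : ∀ i < m, x i = y i) :
    |∑' i : ℕ, (x i : ℝ) / b ^ (i + 1) - ∑' i : ℕ, (y i : ℝ) / b ^ (i + 1)|
      ≤ 5 / 2 * (5 / 7) ^ m := by
  have hb1 : 1 < b := by linarith
  rw [split_sum hb1 hx m, split_sum hb1 hy m]
  have e : ∑ i ∈ Finset.range m, (x i : ℝ) / b ^ (i + 1)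
      = ∑ i ∈ Finset.range m, (y i : ℝ) / b ^ (i + 1) :=
    Finset.sum_congr rfl fun i hi => by rw [h i (Finset.mem_range.mp hi)]
  rw [e, add_sub_add_left_eq_sub, ← sub_div, abs_div, abs_of_pos (by positivity : 0 < b ^ m)]
  have x0 := tail_nonneg hb1 fun i => x (i + m)
  have x1 := tail_le hb1 (binary_shift hx m)
  have y0 := tail_nonneg hb1 fun i => y (i + m)
  have y1 := tail_le hb1 (binary_shift hy m)
  have h5 : 1 / (b - 1) ≤ 5 / 2 := by
    rw [div_le_iff₀ (by linarith)]; linarith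
  have hab : |∑' i : ℕ, (x (i + m) : ℝ) / b ^ (i + 1) - ∑' i : ℕ, (y (i + m) : ℝ) / b ^ (i + 1)|
      ≤ 5 / 2 := by rw [abs_le]; constructor <;> linarith
  have hpow : (7 / 5 : ℝ) ^ m ≤ b ^ m := by gcongr
  calc _ ≤ (5 / 2 : ℝ) / (7 / 5) ^ m := by gcongr
    _ = _ := by rw [div_eq_mul_inv, ← inv_pow]; norm_num

/-- The sequence n ↦ β̂_n is strictly decreasing and converges to β_c. -/
theorem stmt8 (bhat : ℕ → ℝ)
    (hbhat : ∀ n, bhat n ∈ Set.Ioc (1 : ℝ) 2 ∧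
      FatSierpinski.IsQuasiGreedy (bhat n) (FatSierpinski.hatSeq n))
    (bc : ℝ) (hbc : FatSierpinski.IsBetaC bc) :
    StrictAnti bhat ∧ Filter.Tendsto bhat Filter.atTop (nhds bc) := by
  have hbin : ∀ n, IsBinary (hatSeq n) := fun n => (hbhat n).2.1
  refine ⟨strictAnti_nat_of_succ_lt fun n => qg_lt (hbhat (n + 1)).1.1 (hbhat (n + 1)).1.2
    (hbhat n).1.1 (hbhat (n + 1)).2 (hbhat n).2 (hat_seqLT n), ?_⟩
  have lb := lam_binary hbin
  obtain ⟨⟨hbc1, -⟩, hbcs⟩ := hbc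
  have hge : ∀ n, 7 / 5 ≤ bhat n := fun n => by
    have h3 : 3 ≤ 3 * 2 ^ (n + 1) := by have : 0 < 2 ^ (n + 1) := by positivity
                                        omega
    exact base_ge (hbhat n).1.1 (hbin n) (by rw [hat_eq_lam n 0 (by omega), lam_zero])
      (by rw [hat_eq_lam n 2 (by omega), lam_two]) (hbhat n).2.2.2.1
  have key : ∀ n, |1 / bhat n - 1 / bc| ≤ 5 / 2 * (5 / 7) ^ n := fun n => by
    refine (base_diff_abs (hbhat n).1.1 hbc1 lb lam_zero).trans ?_
    have h1 := agree_diff (hge n) lb (hbin n) n (fun i hi => by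
      have : n < 2 ^ n := Nat.lt_two_pow_self
      exact (hat_eq_lam n i (by rw [pow_succ]; omega)).symm)
    have h2 : SumsToOne (bhat n) (hatSeq n) := (hbhat n).2.2.2.1
    unfold SumsToOne at h2 hbcs
    rw [h2] at h1
    rw [hbcs]
    exact h1
  have hg : Tendsto (fun n : ℕ => 5 / 2 * (5 / 7 : ℝ) ^ n) atTop (nhds 0) := by
    simpa using (tendsto_pow_atTop_nhds_zero_of_lt_one (r := (5 / 7 : ℝ)) (by norm_num)
      (by norm_num)).const_mul (5 / 2)
  have hinv : Tendsto (fun n => 1 / bhat n) atTop (nhds (1 / bc)) := by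
    rw [tendsto_iff_dist_tendsto_zero]
    exact squeeze_zero (fun n => dist_nonneg) (fun n => by rw [Real.dist_eq]; exact key n) hg
  have := hinv.inv₀ (by positivity)
  simpa using this

end FatSierpinski
end
end
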